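/- arXiv:1210.1597 — 2 statements merged into one kernel-verified Lean document; each statement's English description precedes it below -/
import Mathlib

section
/- With notation as in the preceding, for any nonempty finite subset Φ ⊆ {1,…,n} and all a, b in a Hopf algebra H: δ_Φ(ab − ba) = Σ over pairs (Λ, Y) with Λ∪Y = Φ and Λ∩Y ≠ ∅ of (δ_Λ(a)·δ_Y(b) − δ_Y(b)·δ_Λ(a)). -/
/- STATEMENT 8: commutator formula for the inclusion–exclusion maps `δ_Φ` in a Hopf algebra:
   for nonempty `Φ`, `δ_Φ(ab − ba) = Σ_{Λ∪Y=Φ, Λ∩Y≠∅} (δ_Λ(a)δ_Y(b) − δ_Y(b)δ_Λ(a))`. -/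

open scoped TensorProduct
open PiTensorProduct

namespace GQDP

variable (R : Type*) [CommRing R] (H : Type*) [Ring H] [HopfAlgebra R H]

/-- The `n`-fold tensor power `H^{⊗n}`. -/
abbrev TP (n : ℕ) := ⨂[R] (_ : Fin n), H

/-- The canonical map `H ⊗ H^{⊗n} → H^{⊗(n+1)}`. -/
noncomputable def step (n : ℕ) : (H ⊗[R] TP R H n) →ₗ[R] TP R H (n + 1) :=
  ((PiTensorProduct.reindex R (fun _ : Fin 1 ⊕ Fin n => H)
      (finSumFinEquiv.trans (finCongr (Nat.add_comm 1 n)))).toLinearMap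
    ∘ₗ (PiTensorProduct.tmulEquiv (ι := Fin 1) (ι₂ := Fin n) R H).toLinearMap)
    ∘ₗ (LinearMap.rTensor (TP R H n)
      (PiTensorProduct.subsingletonEquiv (0 : Fin 1) : (⨂[R] (_ : Fin 1), H) ≃ₗ[R] H).symm.toLinearMap)

/-- The iterated coproduct `Δⁿ : H → H^{⊗n}`, with `Δ⁰ := ε` and
    `Δ^{n+1} := (id ⊗ Δⁿ) ∘ Δ`. -/
noncomputable def DeltaIter : (n : ℕ) → H →ₗ[R] TP R H n
  | 0 => (PiTensorProduct.isEmptyEquiv (ι := Fin 0)).symm.toLinearMap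
          ∘ₗ (Coalgebra.counit : H →ₗ[R] R)
  | n + 1 => step R H n ∘ₗ LinearMap.lTensor H (DeltaIter n)
              ∘ₗ (Coalgebra.comul : H →ₗ[R] H ⊗[R] H)

/-- The partial iterated coproduct `Δ_Σ = j_Σ ∘ Δ^{|Σ|}`, realized as the full iterated
    coproduct `Δⁿ` followed by applying `η ∘ ε` in every tensor position outside `Σ`
    (and the identity in the positions of `Σ`). -/
noncomputable def DeltaSub (n : ℕ) (S : Finset (Fin n)) : H →ₗ[R] TP R H n :=
  (PiTensorProduct.map fun i =>
      if i ∈ S then (LinearMap.id : H →ₗ[R] H)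
      else Algebra.linearMap R H ∘ₗ (Coalgebra.counit : H →ₗ[R] R))
    ∘ₗ DeltaIter R H n

/-- `δ_Φ := Σ_{Σ'⊆Φ} (−1)^{|Φ|−|Σ'|} Δ_{Σ'}` (in particular `δ_∅ = Δ_∅ = ε`). -/
noncomputable def deltaF (n : ℕ) (Φ : Finset (Fin n)) : H →ₗ[R] TP R H n :=
  ∑ S ∈ Φ.powerset, ((-1 : ℤ) ^ (Φ.card - S.card)) • DeltaSub R H n S

theorem mob_aux {ι M : Type*} [DecidableEq ι] [AddCommGroup M] (S : Finset ι) :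
    ∀ f : Finset ι → M,
    ∑ L ∈ S.powerset, ∑ T ∈ L.powerset, ((-1 : ℤ) ^ (L.card - T.card)) • f T = f S := by
  induction S using Finset.induction_on with
  | empty => intro f; simp
  | insert a S ha ih =>
    intro f
    rw [Finset.sum_powerset_insert ha, ← Finset.sum_add_distrib]
    rw [← ih (fun T => f (insert a T))]
    refine Finset.sum_congr rfl fun L hL => ?_
    have hL' : a ∉ L := fun h => ha (Finset.mem_powerset.1 hL h)
    rw [Finset.sum_powerset_insert hL', ← add_assoc, ← Finset.sum_add_distrib]
    have h0 : ∑ T ∈ L.powerset, (((-1 : ℤ) ^ (L.card - T.card)) • f T +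
        ((-1 : ℤ) ^ ((insert a L).card - T.card)) • f T) = 0 := by
      refine Finset.sum_eq_zero fun T hT => ?_
      have hc := Finset.card_le_card (Finset.mem_powerset.1 hT)
      rw [Finset.card_insert_of_notMem hL', Nat.sub_add_comm hc, pow_succ, ← add_smul]
      simp
    rw [h0, zero_add]
    refine Finset.sum_congr rfl fun T hT => ?_
    have hT' : a ∉ T := fun h => hL' (Finset.mem_powerset.1 hT h)
    rw [Finset.card_insert_of_notMem hL', Finset.card_insert_of_notMem hT',
      Nat.add_sub_add_right]

theorem mob_unique {ι M : Type*} [DecidableEq ι] [AddCommGroup M] (u v : Finset ι → M)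
    (h : ∀ S : Finset ι, ∑ L ∈ S.powerset, u L = ∑ L ∈ S.powerset, v L) (S : Finset ι) : u S = v S := by
  induction S using Finset.strongInduction with
  | H S ih =>
    have h1 := h S
    rw [← Finset.add_sum_erase _ u (Finset.mem_powerset_self S),
      ← Finset.add_sum_erase _ v (Finset.mem_powerset_self S)] at h1
    have h2 : ∑ L ∈ S.powerset.erase S, u L = ∑ L ∈ S.powerset.erase S, v L := by
      refine Finset.sum_congr rfl fun L hL => ih L ?_
      rw [Finset.mem_erase, Finset.mem_powerset] at hL
      exact Finset.ssubset_iff_subset_ne.2 ⟨hL.2, hL.1⟩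
    rw [h2] at h1
    exact add_right_cancel h1

theorem step_tmul (n : ℕ) (x : H) (y : Fin n → H) :
    step R H n (x ⊗ₜ tprod R y) = tprod R (fun i =>
      Sum.elim (fun _ : Fin 1 => x) y
        ((finSumFinEquiv.trans (finCongr (Nat.add_comm 1 n))).symm i)) := by
  have h : (PiTensorProduct.subsingletonEquiv (0 : Fin 1) :
      (⨂[R] (_ : Fin 1), H) ≃ₗ[R] H).symm x = tprod R (fun _ => x) := by
    rw [LinearEquiv.symm_apply_eq]; simp
  simp only [step, LinearMap.comp_apply, LinearMap.rTensor_tmul, LinearEquiv.coe_coe, h]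
  rw [PiTensorProduct.tmulEquiv_apply, PiTensorProduct.reindex_tprod]

theorem step_mul (n : ℕ) (x y : H ⊗[R] TP R H n) :
    step R H n (x * y) = step R H n x * step R H n y := by
  induction x using TensorProduct.induction_on with
  | zero => simp
  | add x x' h h' => simp only [add_mul, map_add, h, h']
  | tmul a s =>
    induction y using TensorProduct.induction_on with
    | zero => simp
    | add x x' h h' => simp only [mul_add, map_add, h, h']
    | tmul b t =>
      rw [Algebra.TensorProduct.tmul_mul_tmul]
      induction s using PiTensorProduct.induction_on with
      | add x x' h h' => simp only [add_mul, TensorProduct.tmul_add, map_add, h, h']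
      | smul_tprod r f =>
        induction t using PiTensorProduct.induction_on with
        | add x x' h h' => simp only [mul_add, TensorProduct.tmul_add, map_add, h, h']
        | smul_tprod r' g =>
          simp only [smul_mul_assoc, mul_smul_comm, TensorProduct.tmul_smul, map_smul,
            tprod_mul_tprod, step_tmul]
          congr 3
          funext i
          simp only [Pi.mul_apply]
          cases ((finSumFinEquiv.trans (finCongr (Nat.add_comm 1 n))).symm i) <;> simp

theorem lTensor_mul' {A : Type*} [Ring A] [Algebra R A] (f : H →ₗ[R] A)
    (hf : ∀ x y, f (x * y) = f x * f y) (x y : H ⊗[R] H) :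
    LinearMap.lTensor H f (x * y) = LinearMap.lTensor H f x * LinearMap.lTensor H f y := by
  induction x using TensorProduct.induction_on with
  | zero => simp
  | add x x' h h' => simp only [add_mul, map_add, h, h']
  | tmul a s =>
    induction y using TensorProduct.induction_on with
    | zero => simp
    | add x x' h h' => simp only [mul_add, map_add, h, h']
    | tmul b t => simp [hf]

theorem DeltaIter_mul (n : ℕ) (a b : H) :
    DeltaIter R H n (a * b) = DeltaIter R H n a * DeltaIter R H n b := by
  induction n generalizing a b with
  | zero =>
    simp only [DeltaIter, LinearMap.comp_apply, Bialgebra.counit_mul, LinearEquiv.coe_coe,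
      PiTensorProduct.isEmptyEquiv_symm_apply]
    rw [smul_tprod_mul_smul_tprod]
    congr 2
    exact Subsingleton.elim _ _
  | succ n ih =>
    simp only [DeltaIter, LinearMap.comp_apply, Bialgebra.comul_mul]
    rw [lTensor_mul' R H _ ih, step_mul]

theorem map_mul' (n : ℕ) (f : Fin n → H →ₗ[R] H) (hf : ∀ i x y, f i (x * y) = f i x * f i y)
    (s t : TP R H n) :
    PiTensorProduct.map f (s * t) = PiTensorProduct.map f s * PiTensorProduct.map f t := by
  induction s using PiTensorProduct.induction_on with
  | add x x' h h' => simp only [add_mul, map_add, h, h']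
  | smul_tprod r u =>
    induction t using PiTensorProduct.induction_on with
    | add x x' h h' => simp only [mul_add, map_add, h, h']
    | smul_tprod r' v =>
      simp only [smul_mul_assoc, mul_smul_comm, map_smul, tprod_mul_tprod,
        PiTensorProduct.map_tprod]
      congr 3
      funext i
      simp [hf]

theorem DeltaSub_mul (n : ℕ) (S : Finset (Fin n)) (a b : H) :
    DeltaSub R H n S (a * b) = DeltaSub R H n S a * DeltaSub R H n S b := by
  simp only [DeltaSub, LinearMap.comp_apply, DeltaIter_mul]
  refine map_mul' R H n _ (fun i x y => ?_) _ _
  split_ifs <;> simp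

theorem map_comm' (n : ℕ) (f g : Fin n → H →ₗ[R] H)
    (hf : ∀ i x y, Commute (f i x) (g i y)) (s t : TP R H n) :
    Commute (PiTensorProduct.map f s) (PiTensorProduct.map g t) := by
  induction s using PiTensorProduct.induction_on with
  | add x x' h h' => rw [map_add]; exact h.add_left h'
  | smul_tprod r u =>
    induction t using PiTensorProduct.induction_on with
    | add x x' h h' => rw [map_add]; exact h.add_right h'
    | smul_tprod r' v =>
      simp only [map_smul, PiTensorProduct.map_tprod]
      refine Commute.smul_left (Commute.smul_right ?_ _) _
      refine Commute.tprod ?_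
      funext i
      exact hf i _ _

theorem DeltaSub_comm (n : ℕ) (S T : Finset (Fin n)) (h : Disjoint S T) (a b : H) :
    Commute (DeltaSub R H n S a) (DeltaSub R H n T b) := by
  simp only [DeltaSub, LinearMap.comp_apply]
  refine map_comm' R H n _ _ (fun i x y => ?_) _ _
  by_cases hS : i ∈ S
  · rw [if_neg (Finset.disjoint_left.1 h hS)]
    exact Algebra.commute_algebraMap_right _ _
  · rw [if_neg hS]
    exact Algebra.commute_algebraMap_left _ _

theorem deltaF_apply (n : ℕ) (S : Finset (Fin n)) (a : H) :
    deltaF R H n S a =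
      ∑ T ∈ S.powerset, ((-1 : ℤ) ^ (S.card - T.card)) • DeltaSub R H n T a := by
  simp only [deltaF, LinearMap.sum_apply]
  rfl

theorem deltaF_comm (n : ℕ) (S T : Finset (Fin n)) (h : Disjoint S T) (a b : H) :
    Commute (deltaF R H n S a) (deltaF R H n T b) := by
  rw [deltaF_apply, deltaF_apply]
  refine Commute.sum_left _ _ _ fun U hU => Commute.sum_right _ _ _ fun V hV => ?_
  refine Commute.smul_left (Commute.smul_right ?_ _) _
  exact DeltaSub_comm R H n U V
    (h.mono (Finset.mem_powerset.1 hU) (Finset.mem_powerset.1 hV)) a b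

theorem sum_deltaF (n : ℕ) (S : Finset (Fin n)) (a : H) :
    ∑ L ∈ S.powerset, deltaF R H n L a = DeltaSub R H n S a := by
  simp only [deltaF_apply]
  exact mob_aux S (fun T => DeltaSub R H n T a)

theorem deltaF_mul (n : ℕ) (a b : H) (Φ : Finset (Fin n)) :
    deltaF R H n Φ (a * b) =
      ∑ p ∈ (Φ.powerset ×ˢ Φ.powerset).filter (fun p => p.1 ∪ p.2 = Φ),
        deltaF R H n p.1 a * deltaF R H n p.2 b := by
  refine mob_unique (fun Φ => deltaF R H n Φ (a * b)) (fun Φ =>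
      ∑ p ∈ (Φ.powerset ×ˢ Φ.powerset).filter (fun p => p.1 ∪ p.2 = Φ),
        deltaF R H n p.1 a * deltaF R H n p.2 b) (fun S => ?_) Φ
  rw [sum_deltaF, DeltaSub_mul, ← sum_deltaF, ← sum_deltaF, Finset.sum_mul_sum,
    ← Finset.sum_product',
    ← Finset.sum_fiberwise_of_maps_to (t := S.powerset) (g := fun p => p.1 ∪ p.2)]
  · refine Finset.sum_congr rfl fun L hL => Finset.sum_congr ?_ fun _ _ => rfl
    rw [Finset.mem_powerset] at hL
    ext p
    simp only [Finset.mem_filter, Finset.mem_product, Finset.mem_powerset]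
    constructor
    · rintro ⟨-, rfl⟩
      exact ⟨⟨Finset.subset_union_left, Finset.subset_union_right⟩, rfl⟩
    · rintro ⟨⟨h1, h2⟩, h3⟩
      exact ⟨⟨h1.trans hL, h2.trans hL⟩, h3⟩
  · intro p hp
    simp only [Finset.mem_product, Finset.mem_powerset] at hp ⊢
    exact Finset.union_subset hp.1 hp.2

/-- For every nonempty finite `Φ ⊆ {1,…,n}` and all `a, b ∈ H`:
    `δ_Φ(ab − ba) = Σ_{Λ∪Y=Φ, Λ∩Y≠∅} (δ_Λ(a)·δ_Y(b) − δ_Y(b)·δ_Λ(a))`. -/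
theorem deltaF_commutator (a b : H) (n : ℕ) (Φ : Finset (Fin n)) (hΦ : Φ.Nonempty) :
    deltaF R H n Φ (a * b - b * a) =
      ∑ p ∈ (Φ.powerset ×ˢ Φ.powerset).filter
          (fun p => p.1 ∪ p.2 = Φ ∧ (p.1 ∩ p.2).Nonempty),
        (deltaF R H n p.1 a * deltaF R H n p.2 b -
          deltaF R H n p.2 b * deltaF R H n p.1 a) := by
  have hba : deltaF R H n Φ (b * a) =
      ∑ p ∈ (Φ.powerset ×ˢ Φ.powerset).filter (fun p => p.1 ∪ p.2 = Φ),
        deltaF R H n p.2 b * deltaF R H n p.1 a := by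
    rw [deltaF_mul]
    refine Finset.sum_nbij' Prod.swap Prod.swap ?_ ?_ (fun _ _ => rfl) (fun _ _ => rfl)
      (fun _ _ => rfl)
    all_goals
      intro p hp
      simp only [Finset.mem_filter, Finset.mem_product, Prod.fst_swap, Prod.snd_swap] at hp ⊢
      exact ⟨hp.1.symm, by rw [Finset.union_comm]; exact hp.2⟩
  rw [map_sub, hba, deltaF_mul, ← Finset.sum_sub_distrib, ← Finset.filter_filter]
  symm
  refine Finset.sum_filter_of_ne fun p _ hne => ?_
  by_contra hcon
  apply hne
  rw [Finset.not_nonempty_iff_eq_empty, ← Finset.disjoint_iff_inter_eq_empty] at hcon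
  exact sub_eq_zero.2 (deltaF_comm R H n p.1 p.2 hcon a b)

end GQDP
end

section
/- Let H be a torsion-free Hopf algebra over C[q,q⁻¹], I_q ⊆ H a left ideal and two-sided coideal, and I_q^∨ := Σ_{n≥1}(q−1)^{−n}J^{n−1}I_q ⊆ H^∨. Define (I_q^∨)^! := { x ∈ I_q^∨ | δ_n(x) ∈ (q−1)ⁿ Σ_{s=1}^n (H^∨)^{⊗(s−1)} ⊗ I_q^∨ ⊗ (H^∨)^{⊗(n−s)} for all n ≥ 1 }. Then I_q ⊆ (I_q^∨)^!. -/
set_option synthInstance.maxHeartbeats 1000000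
set_option maxHeartbeats 1000000

/- STATEMENT 16: reciprocity, first inclusion. For a left ideal and two-sided coideal
   I_q of a torsion-free Hopf algebra H over ℂ[q,q⁻¹] (an integral form of a ℂ(q)-Hopf
   algebra A), with I_q^∨ ⊆ H^∨ and
   (I_q^∨)^! := { x ∈ I_q^∨ | δ_n(x) ∈ (q−1)ⁿ Σ_s (H^∨)^{⊗(s−1)}⊗I_q^∨⊗(H^∨)^{⊗(n−s)} ∀n≥1 },
   one has I_q ⊆ (I_q^∨)^!. -/

open scoped TensorProduct
open PiTensorProduct

namespace GQDP

/-- The ground ring `ℂ[q,q⁻¹]` of complex Laurent polynomials. -/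
abbrev R : Type := LaurentPolynomial ℂ

/-- The field `ℂ(q)` of rational functions, realized as the fraction field of `ℂ[q,q⁻¹]`. -/
abbrev K : Type := FractionRing R

/-- The indeterminate `q`, as an element of `ℂ[q,q⁻¹]`. -/
noncomputable def q : R := LaurentPolynomial.T 1

/-- The indeterminate `q`, as an element of `ℂ(q)`. -/
noncomputable def qK : K := algebraMap R K q

/- `A` is a Hopf algebra over `ℂ(q)` (playing the role of `H ⊗_{ℂ[q,q⁻¹]} ℂ(q)`), in which
   all the `ℂ[q,q⁻¹]`-integral forms below live as `R`-submodules. -/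
variable (A : Type*) [Ring A] [HopfAlgebra K A] [Algebra R A] [IsScalarTower R K A]

/-- Scaling of an `R`-submodule of `A` by a scalar `c ∈ ℂ(q)`. -/
noncomputable def ksmul (c : K) (p : Submodule R A) : Submodule R A :=
  Submodule.span R ((fun a => c • a) '' (p : Set A))

/-- The "tensor product" of two `R`-submodules of `A` inside `A ⊗[ℂ(q)] A`: the additive
    subgroup generated by the corresponding pure tensors (this is also their `R`-span). -/
noncomputable def tsubK (P Q : Submodule R A) : AddSubgroup (A ⊗[K] A) :=
  AddSubgroup.closure {z | ∃ p ∈ P, ∃ r ∈ Q, z = p ⊗ₜ[K] r}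

/-- The augmentation ideal `J := H ∩ ker ε` of an integral form `H ⊆ A`. -/
noncomputable def Jform (H : Submodule R A) : Submodule R A :=
  H ⊓ (LinearMap.ker (Coalgebra.counit : A →ₗ[K] K)).restrictScalars R

/-- Drinfeld's algebra `H^∨ := Σ_{n≥0} (q−1)^{−n} Jⁿ`. -/
noncomputable def Hvee (H : Submodule R A) : Submodule R A :=
  ⨆ n : ℕ, ksmul A (((qK - 1)⁻¹) ^ n) ((Jform A H) ^ n)

/-- `H` is a Hopf-algebra integral form of `A` over `ℂ[q,q⁻¹]`: a unital `R`-subalgebra,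
    with `Δ(H) ⊆ H ⊗ H`, `ε(H) ⊆ ℂ[q,q⁻¹]` and `S(H) ⊆ H`. -/
structure IsHopfForm (H : Submodule R A) : Prop where
  one_mem : (1 : A) ∈ H
  mul_mem : ∀ x ∈ H, ∀ y ∈ H, x * y ∈ H
  comul_mem : ∀ x ∈ H, Coalgebra.comul (R := K) x ∈ tsubK A H H
  counit_mem : ∀ x ∈ H, ∃ r : R, Coalgebra.counit (R := K) x = algebraMap R K r
  antipode_mem : ∀ x ∈ H, HopfAlgebra.antipode (R := K) x ∈ H

/-- The `n`-fold tensor power `A^{⊗n}` over `ℂ(q)`. -/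
abbrev TPK (n : ℕ) := ⨂[K] (_ : Fin n), A

/-- The "tensor product" of a family of `R`-submodules `p i ⊆ A` inside `A^{⊗n}`: the
    additive subgroup generated by the pure tensors with `i`-th entry in `p i`. -/
noncomputable def tgrpK {n : ℕ} (p : Fin n → Submodule R A) : AddSubgroup (TPK A n) :=
  AddSubgroup.closure {z | ∃ f : Fin n → A, (∀ i, f i ∈ p i) ∧ z = PiTensorProduct.tprod K f}

/-- The canonical map `A ⊗ A^{⊗n} → A^{⊗(n+1)}`. -/
noncomputable def stepK (n : ℕ) : (A ⊗[K] TPK A n) →ₗ[K] TPK A (n + 1) :=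
  ((PiTensorProduct.reindex K (fun _ : Fin 1 ⊕ Fin n => A)
      (finSumFinEquiv.trans (finCongr (Nat.add_comm 1 n)))).toLinearMap
    ∘ₗ (PiTensorProduct.tmulEquiv (ι := Fin 1) (ι₂ := Fin n) K A).toLinearMap)
    ∘ₗ (LinearMap.rTensor (TPK A n)
      (PiTensorProduct.subsingletonEquiv (0 : Fin 1) : (⨂[K] (_ : Fin 1), A) ≃ₗ[K] A).symm.toLinearMap)

/-- The iterated coproduct `Δⁿ : A → A^{⊗n}`, with `Δ⁰ := ε` and `Δ^{n+1} := (id ⊗ Δⁿ) ∘ Δ`. -/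
noncomputable def DeltaIterK : (n : ℕ) → A →ₗ[K] TPK A n
  | 0 => (PiTensorProduct.isEmptyEquiv (ι := Fin 0)).symm.toLinearMap
          ∘ₗ (Coalgebra.counit : A →ₗ[K] K)
  | n + 1 => stepK A n ∘ₗ LinearMap.lTensor A (DeltaIterK n)
              ∘ₗ (Coalgebra.comul : A →ₗ[K] A ⊗[K] A)

/-- `δ_n := (id − η∘ε)^{⊗n} ∘ Δⁿ : A → A^{⊗n}`. -/
noncomputable def deltaNK (n : ℕ) : A →ₗ[K] TPK A n :=
  (PiTensorProduct.map fun _ =>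
      (LinearMap.id : A →ₗ[K] A) - Algebra.linearMap K A ∘ₗ (Coalgebra.counit : A →ₗ[K] K))
    ∘ₗ DeltaIterK A n

/-- `I^∨ := Σ_{n≥1} (q−1)^{−n} J^{n−1}·I`. -/
noncomputable def Ivee (H I : Submodule R A) : Submodule R A :=
  ⨆ n : ℕ, ksmul A (((qK - 1)⁻¹) ^ (n + 1)) (((Jform A H) ^ n) * I)

/-- The Drinfeld-type transform `(I^∨)^!`, relative to `H^∨`. -/
noncomputable def IveeShriek (H I : Submodule R A) : Set A :=
  {x | x ∈ Ivee A H I ∧ ∀ n : ℕ,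
    ∃ y ∈ ⨆ s : Fin (n + 1),
        tgrpK A (fun i : Fin (n + 1) => if i = s then Ivee A H I else Hvee A H),
      deltaNK A (n + 1) x = ((qK - 1) ^ (n + 1)) • y}

lemma stepK_tprod (n : ℕ) (a : A) (f : Fin n → A) :
    stepK A n (a ⊗ₜ[K] PiTensorProduct.tprod K f) =
      PiTensorProduct.tprod K (Fin.cons a f : Fin (n + 1) → A) := by
  have h1 : (PiTensorProduct.subsingletonEquiv (0 : Fin 1) : (⨂[K] (_ : Fin 1), A) ≃ₗ[K] A).symm a
      = PiTensorProduct.tprod K (fun _ : Fin 1 => a) := by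
    rw [LinearEquiv.symm_apply_eq]
    simp
  simp only [stepK, LinearMap.comp_apply, LinearMap.rTensor_tmul, LinearEquiv.coe_coe]
  rw [h1]
  erw [PiTensorProduct.tmulEquiv_apply]
  erw [PiTensorProduct.reindex_tprod]
  congr 1
  funext i
  refine Fin.cases ?_ (fun j => ?_) i
  · have : (finSumFinEquiv.trans (finCongr (Nat.add_comm 1 n))).symm (0 : Fin (n+1))
        = Sum.inl 0 := by
      rw [Equiv.symm_apply_eq]; ext; simp
    simp only [this]; simp
  · have : (finSumFinEquiv.trans (finCongr (Nat.add_comm 1 n))).symm j.succ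
        = Sum.inr j := by
      rw [Equiv.symm_apply_eq]; ext; simp [Nat.add_comm]
    simp only [this]; simp

lemma qK_sub_one_ne : (qK - 1 : K) ≠ 0 := by
  intro h
  have h1 : algebraMap R K q = algebraMap R K 1 := by
    rw [map_one]; exact sub_eq_zero.mp h
  have h2 : q = 1 := IsFractionRing.injective R K h1
  have h3 : (LaurentPolynomial.T 1 : R) = LaurentPolynomial.T 0 := by
    rw [LaurentPolynomial.T_zero]; exact h2
  have h4 := congrArg LaurentPolynomial.degree h3
  rw [LaurentPolynomial.degree_T, LaurentPolynomial.degree_T] at h4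
  exact absurd h4 (by decide)

/-- Tensoring a pure tensor in front, inside additive closures. -/
lemma stepK_mem {n : ℕ} (p : Fin n → Submodule R A) (p' : Fin (n + 1) → Submodule R A)
    (a : A) (ha : a ∈ p' 0) (hp : ∀ i, p i ≤ p' i.succ) (z : TPK A n) (hz : z ∈ tgrpK A p) :
    stepK A n (a ⊗ₜ[K] z) ∈ tgrpK A p' := by
  induction hz using AddSubgroup.closure_induction with
  | mem z hz =>
    obtain ⟨f, hf, rfl⟩ := hz
    rw [stepK_tprod]
    refine AddSubgroup.subset_closure ⟨_, ?_, rfl⟩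
    intro i
    refine Fin.cases ?_ (fun j => ?_) i
    · simpa using ha
    · simpa using hp j (hf j)
  | zero => rw [TensorProduct.tmul_zero, map_zero]; exact zero_mem _
  | add x y _ _ hx hy => rw [TensorProduct.tmul_add, map_add]; exact add_mem hx hy
  | neg x _ hx => rw [TensorProduct.tmul_neg, map_neg]; exact neg_mem hx

lemma Delta_zero_apply (x : A) : DeltaIterK A 0 x =
    (Coalgebra.counit (R := K) x) • PiTensorProduct.tprod K (Fin.elim0 : Fin 0 → A) := by
  simp only [DeltaIterK, LinearMap.comp_apply, LinearEquiv.coe_coe]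
  rw [LinearEquiv.symm_apply_eq]
  simp

lemma step_Delta_mem (H : Submodule R A) (hH : IsHopfForm A H) (n : ℕ) :
    ∀ (P : Submodule R A) (p : Fin (n + 1) → Submodule R A),
      P ≤ p 0 → (∀ i : Fin n, p i.succ = H) →
      ∀ a ∈ P, ∀ x ∈ H, stepK A n (a ⊗ₜ[K] DeltaIterK A n x) ∈ tgrpK A p := by
  induction n with
  | zero =>
    intro P p hP hp a ha x hx
    obtain ⟨r, hr⟩ := hH.counit_mem x hx
    rw [Delta_zero_apply, hr, TensorProduct.tmul_smul, TensorProduct.smul_tmul', stepK_tprod]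
    refine AddSubgroup.subset_closure ⟨_, ?_, rfl⟩
    intro i
    refine Fin.cases ?_ (fun j => j.elim0) i
    simp only [Fin.cons_zero, algebraMap_smul]
    exact (p 0).smul_mem r (hP ha)
  | succ n ih =>
    intro P p hP hp a ha x hx
    refine stepK_mem A (fun _ => H) p a (hP ha) (fun i => (hp i).ge) _ ?_
    simp only [DeltaIterK, LinearMap.comp_apply]
    have hc := hH.comul_mem x hx
    generalize Coalgebra.comul (R := K) x = z at hc
    induction hc using AddSubgroup.closure_induction with
    | mem z hz =>
      obtain ⟨b, hb, y, hy, rfl⟩ := hz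
      rw [LinearMap.lTensor_tmul]
      exact ih H _ le_rfl (fun _ => rfl) b hb y hy
    | zero => simp only [map_zero]; exact zero_mem _
    | add x y _ _ hx hy => simp only [map_add]; exact add_mem hx hy
    | neg x _ hx => simp only [map_neg]; exact neg_mem hx

lemma Delta_mem (H I : Submodule R A) (hH : IsHopfForm A H)
    (hcoideal : ∀ x ∈ I, Coalgebra.comul (R := K) x ∈ tsubK A H I ⊔ tsubK A I H)
    (hcounit : ∀ x ∈ I, Coalgebra.counit (R := K) x = 0) (n : ℕ) :
    ∀ x ∈ I, DeltaIterK A n x ∈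
      ⨆ s : Fin n, tgrpK A (fun i : Fin n => if i = s then I else H) := by
  induction n with
  | zero =>
    intro x hx
    rw [Delta_zero_apply, hcounit x hx, zero_smul]; exact zero_mem _
  | succ n ih =>
    intro x hx
    simp only [DeltaIterK, LinearMap.comp_apply]
    obtain ⟨u, hu, v, hv, huv⟩ := AddSubgroup.mem_sup.mp (hcoideal x hx)
    rw [← huv, map_add, map_add]
    refine add_mem ?_ ?_
    · clear huv
      induction hu using AddSubgroup.closure_induction with
      | mem z hz =>
        obtain ⟨b, hb, y, hy, rfl⟩ := hz
        rw [LinearMap.lTensor_tmul]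
        have hz := ih y hy
        generalize DeltaIterK A n y = z at hz
        induction hz using AddSubgroup.iSup_induction' with
        | hp s z hz =>
          refine AddSubgroup.mem_iSup_of_mem s.succ ?_
          refine stepK_mem A _ _ b ?_ ?_ z hz
          · rw [if_neg (Fin.succ_ne_zero s).symm]; exact hb
          · intro i; simp [Fin.succ_inj]
        | h1 => rw [TensorProduct.tmul_zero, map_zero]; exact zero_mem _
        | hadd x y _ _ hx hy => rw [TensorProduct.tmul_add, map_add]; exact add_mem hx hy
      | zero => simp only [map_zero]; exact zero_mem _
      | add x y _ _ hx hy => simp only [map_add]; exact add_mem hx hy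
      | neg x _ hx => simp only [map_neg]; exact neg_mem hx
    · clear huv
      refine AddSubgroup.mem_iSup_of_mem 0 ?_
      induction hv using AddSubgroup.closure_induction with
      | mem z hz =>
        obtain ⟨b, hb, y, hy, rfl⟩ := hz
        rw [LinearMap.lTensor_tmul]
        refine step_Delta_mem A H hH n I _ ?_ ?_ b hb y hy
        · simp
        · intro i; rw [if_neg (Fin.succ_ne_zero i)]
      | zero => simp only [map_zero]; exact zero_mem _
      | add x y _ _ hx hy => simp only [map_add]; exact add_mem hx hy
      | neg x _ hx => simp only [map_neg]; exact neg_mem hx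

lemma inv_smul_mem_Ivee (H I : Submodule R A) (x : A) (hx : x ∈ I) :
    (qK - 1)⁻¹ • x ∈ Ivee A H I := by
  refine Submodule.mem_iSup_of_mem 0 ?_
  refine Submodule.subset_span ⟨x, ?_, ?_⟩
  · simpa using hx
  · simp

lemma inv_smul_mem_Hvee (H : Submodule R A) (x : A) (hx : x ∈ Jform A H) :
    (qK - 1)⁻¹ • x ∈ Hvee A H := by
  refine Submodule.mem_iSup_of_mem 1 ?_
  refine Submodule.subset_span ⟨x, ?_, ?_⟩
  · simpa using hx
  · simp

lemma proj_mem (H : Submodule R A) (hH : IsHopfForm A H) (x : A) (hx : x ∈ H) :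
    ((LinearMap.id : A →ₗ[K] A) - Algebra.linearMap K A ∘ₗ (Coalgebra.counit : A →ₗ[K] K)) x
      ∈ Jform A H := by
  obtain ⟨r, hr⟩ := hH.counit_mem x hx
  refine ⟨?_, ?_⟩
  · simp only [LinearMap.sub_apply, LinearMap.id_apply, LinearMap.comp_apply, hr,
      Algebra.linearMap_apply]
    refine H.sub_mem hx ?_
    rw [Algebra.algebraMap_eq_smul_one, algebraMap_smul]
    exact H.smul_mem r hH.one_mem
  · show Coalgebra.counit (R := K) _ = 0
    simp only [LinearMap.sub_apply, LinearMap.id_apply, LinearMap.comp_apply,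
      Algebra.linearMap_apply, map_sub]
    rw [Bialgebra.counit_algebraMap, sub_self]

/-- `I_q ⊆ (I_q^∨)^!`. -/
theorem I_subset_IveeShriek (H I : Submodule R A) (hH : IsHopfForm A H)
    (hIH : I ≤ H)
    (hIdeal : ∀ h ∈ H, ∀ x ∈ I, h * x ∈ I)
    (hcoideal : ∀ x ∈ I, Coalgebra.comul (R := K) x ∈ tsubK A H I ⊔ tsubK A I H)
    (hcounit : ∀ x ∈ I, Coalgebra.counit (R := K) x = 0) :
    ∀ x ∈ I, x ∈ IveeShriek A H I := by
  intro x hx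
  have hq := qK_sub_one_ne
  refine ⟨?_, fun n => ?_⟩
  · have h := (Ivee A H I).smul_mem (q - 1) (inv_smul_mem_Ivee A H I x hx)
    have e : (q - 1 : R) • ((qK - 1)⁻¹ • x) = x := by
      rw [← algebraMap_smul K (q - 1 : R), map_sub, map_one]
      exact smul_inv_smul₀ hq x
    rwa [e] at h
  · have hz := Delta_mem A H I hH hcoideal hcounit (n + 1) x hx
    simp only [deltaNK, LinearMap.comp_apply]
    generalize DeltaIterK A (n + 1) x = z at hz
    induction hz using AddSubgroup.iSup_induction' with
    | hp s z hz =>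
      induction hz using AddSubgroup.closure_induction with
      | mem z hz =>
        obtain ⟨f, hf, rfl⟩ := hz
        rw [PiTensorProduct.map_tprod]
        set g : Fin (n + 1) → A := fun i =>
          ((LinearMap.id : A →ₗ[K] A) -
            Algebra.linearMap K A ∘ₗ (Coalgebra.counit : A →ₗ[K] K)) (f i) with hg
        refine ⟨PiTensorProduct.tprod K (fun i => (qK - 1)⁻¹ • g i), ?_, ?_⟩
        · refine AddSubgroup.mem_iSup_of_mem s (AddSubgroup.subset_closure ⟨_, ?_, rfl⟩)
          intro i
          have hfi := hf i
          by_cases his : i = s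
          · simp only [if_pos his] at hfi ⊢
            have : g i = f i := by
              simp [hg, hcounit _ hfi]
            rw [this]
            exact inv_smul_mem_Ivee A H I _ hfi
          · simp only [if_neg his] at hfi ⊢
            exact inv_smul_mem_Hvee A H _ (proj_mem A H hH _ hfi)
        · have := (PiTensorProduct.tprod K (s := fun _ : Fin (n + 1) => A)).map_smul_univ
            (fun _ => (qK - 1 : K)) (fun i => (qK - 1)⁻¹ • g i)
          simp only [Finset.prod_const, Finset.card_univ, Fintype.card_fin] at this
          rw [← this]
          congr 1
          funext i
          exact (smul_inv_smul₀ hq _).symm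
      | zero => exact ⟨0, zero_mem _, by simp⟩
      | add x y _ _ hx hy =>
        obtain ⟨u, hu, eu⟩ := hx
        obtain ⟨v, hv, ev⟩ := hy
        exact ⟨u + v, add_mem hu hv, by rw [map_add, eu, ev, smul_add]⟩
      | neg x _ hx =>
        obtain ⟨u, hu, eu⟩ := hx
        exact ⟨-u, neg_mem hu, by rw [map_neg, eu, smul_neg]⟩
    | h1 => exact ⟨0, zero_mem _, by simp⟩
    | hadd x y _ _ hx hy =>
      obtain ⟨u, hu, eu⟩ := hx
      obtain ⟨v, hv, ev⟩ := hy
      exact ⟨u + v, add_mem hu hv, by rw [map_add, eu, ev, smul_add]⟩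

end GQDP
end
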